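/- Let N ≥ 2 and K ≥ 2 be integers and let n be an integer with 2 ≤ n ≤ ⌊N/2⌋. Say a subset S of ℤ/Nℤ is contained in an arc of length m if there exists c ∈ ℤ/Nℤ with S ⊆ {c, c+1, …, c+m−1}. Then the number of tuples (n₂,…,n_K) ∈ (ℤ/Nℤ)^{K−1} for which the minimal m such that {0, n₂, …, n_K} is contained in an arc of length m equals exactly n, is 2·(n^{K−1} − (n−1)^{K−1}) + (n−2)·(n^{K−1} − 2(n−1)^{K−1} + (n−2)^{K−1}). -/

import Mathlib

/-!
Let `m` satisfy `2 * m < N`. A configuration lying in an arc of length `m + 1` can be recentred so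
that the arc starts at one of its points; it is then given by offsets in `{0, …, m}`, one for the
point `0` and one for each `n_j`, at least one of which vanishes. These offsets are unique: two
choices differ by a common shift modulo `N`, and `2 * m < N` turns this into a common shift of
natural numbers, which is trivial as both tuples have minimum zero. Hence
`(m + 1) ^ K - m ^ K` configurations lie in an arc of length `m + 1`, and the number with minimal
length `n` is the difference of the values at `m + 1 = n` and `m + 1 = n - 1`.
-/

section Arc

variable {R : Type*}

/-- The arc `{c, c + 1, …, c + m - 1}` of length `m` starting at `c`; for `R = ZMod N` it wraps
around the ring of `N` positions. -/
def arc [AddMonoidWithOne R] (c : R) (m : ℕ) : Set R :=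
  {x | ∃ i : ℕ, i < m ∧ x = c + i}

/-- The set `s` is contained in some arc of length `m`. -/
def CoveredByArc [AddMonoidWithOne R] (s : Set R) (m : ℕ) : Prop :=
  ∃ c : R, s ⊆ arc c m

/-- The minimal length of an arc containing `s`, with value `0` when no arc contains `s`. -/
noncomputable def minArcLength [AddMonoidWithOne R] (s : Set R) : ℕ :=
  sInf {m | CoveredByArc s m}

section AddMonoidWithOne

variable [AddMonoidWithOne R] {s : Set R} {c : R} {m n : ℕ}

theorem arc_mono (h : m ≤ n) : arc c m ⊆ arc c n := by
  rintro x ⟨i, hi, rfl⟩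
  exact ⟨i, hi.trans_le h, rfl⟩

theorem CoveredByArc.mono (hs : CoveredByArc s m) (h : m ≤ n) : CoveredByArc s n :=
  let ⟨c, hc⟩ := hs
  ⟨c, hc.trans (arc_mono h)⟩

theorem arc_succ_subset_insert : arc c (m + 1) ⊆ insert c (arc (c + 1) m) := by
  rintro x ⟨_ | i, hi, rfl⟩
  · simp
  · refine Or.inr ⟨i, by lia, ?_⟩
    rw [add_comm i 1, Nat.cast_add, Nat.cast_one, add_assoc]

theorem exists_mem_subset_arc (hs : s.Nonempty) (h : CoveredByArc s m) :
    ∃ c ∈ s, s ⊆ arc c m := by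
  obtain ⟨c, hc⟩ := h
  induction m generalizing c with
  | zero =>
    obtain ⟨x, hx⟩ := hs
    obtain ⟨i, hi, -⟩ := hc hx
    exact absurd hi i.not_lt_zero
  | succ m ih =>
    by_cases hcs : c ∈ s
    · exact ⟨c, hcs, hc⟩
    · have h_tail : s ⊆ arc (c + 1) m :=
        (Set.subset_insert_iff_of_notMem hcs).1 (hc.trans arc_succ_subset_insert)
      obtain ⟨d, hds, hd⟩ := ih (c + 1) h_tail
      exact ⟨d, hds, hd.trans (arc_mono m.le_succ)⟩

theorem minArcLength_eq_succ_iff :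
    minArcLength s = m + 1 ↔ CoveredByArc s (m + 1) ∧ ¬CoveredByArc s m :=
  Nat.sInf_upward_closed_eq_succ_iff (fun _ _ h hs ↦ CoveredByArc.mono hs h) m

end AddMonoidWithOne

end Arc

section GroundedTuples

variable (κ : Type*) [Fintype κ] [DecidableEq κ] (m : ℕ)

/-- The tuples of natural numbers at most `m` that take the value `0`: the offsets of a
configuration from the start of an arc of length `m + 1` which begins at one of its points. -/
def groundedTuples : Finset (κ → ℕ) :=
  Fintype.piFinset (fun _ ↦ Finset.Icc 0 m) \ Fintype.piFinset (fun _ ↦ Finset.Icc 1 m)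

variable {κ m} in
theorem mem_groundedTuples {w : κ → ℕ} :
    w ∈ groundedTuples κ m ↔ (∀ j, w j ≤ m) ∧ ∃ j, w j = 0 := by
  simp only [groundedTuples, Finset.mem_sdiff, Fintype.mem_piFinset, Finset.mem_Icc, not_forall]
  grind

theorem card_groundedTuples_add_pow :
    (groundedTuples κ m).card + m ^ Fintype.card κ = (m + 1) ^ Fintype.card κ := by
  have h_sub : Fintype.piFinset (fun _ : κ ↦ Finset.Icc 1 m) ⊆
      Fintype.piFinset (fun _ ↦ Finset.Icc 0 m) :=
    Fintype.piFinset_subset _ _ fun _ ↦ Finset.Icc_subset_Icc_left zero_le_one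
  simpa [groundedTuples] using Finset.card_sdiff_add_card_eq_card h_sub

end GroundedTuples

section Counting

variable {R ι : Type*} [AddGroupWithOne R]

variable (R) in
/-- The positions of the points indexed by `ι` when the distinguished point `none` is moved to `0`,
for a configuration whose points have offsets `w` from a common origin. -/
def relativePosition (w : Option ι → ℕ) (i : ι) : R :=
  -(w none : R) + w (some i)

theorem coveredByArc_relativePosition {w : Option ι → ℕ} {m : ℕ} (hw : ∀ j, w j ≤ m) :
    CoveredByArc (insert 0 (Set.range (relativePosition R w))) (m + 1) := by
  refine ⟨-(w none : R), Set.insert_subset ?_ (Set.range_subset_iff.2 fun i ↦ ?_)⟩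
  · exact ⟨w none, Nat.lt_succ_of_le (hw none), (neg_add_cancel _).symm⟩
  · exact ⟨w (some i), Nat.lt_succ_of_le (hw _), rfl⟩

variable (N : ℕ) [CharP R N] {m : ℕ}

theorem add_eq_add_of_relativePosition_eq {w w' : Option ι → ℕ} (hw : ∀ j, w j ≤ m)
    (hw' : ∀ j, w' j ≤ m) (hm : 2 * m < N) (h : relativePosition R w = relativePosition R w')
    (j : Option ι) : w' none + w j = w none + w' j := by
  have h_neg_add : -(w none : R) + w j = -(w' none : R) + w' j := by
    cases j with
    | none => simp only [neg_add_cancel]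
    | some i => exact congrFun h i
  have h_cast : ((w' none + w j : ℕ) : R) = (w none + w' j : ℕ) := by
    calc ((w' none + w j : ℕ) : R)
        = (w' none + w none : ℕ) + (-(w none : R) + w j) := by
          rw [Nat.cast_add, Nat.cast_add, add_assoc, add_neg_cancel_left]
      _ = (w none + w' none : ℕ) + (-(w' none : R) + w' j) := by
          rw [h_neg_add, add_comm (w' none)]
      _ = (w none + w' j : ℕ) := by
          rw [Nat.cast_add, Nat.cast_add, add_assoc, add_neg_cancel_left]
  have h_lt {a b : ℕ} (ha : a ≤ m) (hb : b ≤ m) : a + b < N := by lia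
  exact CharP.natCast_injOn_Iio R N (h_lt (hw' _) (hw _)) (h_lt (hw _) (hw' _)) h_cast

theorem injOn_relativePosition [Fintype ι] [DecidableEq ι] (hm : 2 * m < N) :
    Set.InjOn (relativePosition R) (groundedTuples (Option ι) m : Set (Option ι → ℕ)) := by
  intro w hw w' hw' h
  obtain ⟨hw_le, j, hj⟩ := mem_groundedTuples.1 hw
  obtain ⟨hw'_le, j', hj'⟩ := mem_groundedTuples.1 hw'
  have h_shift := add_eq_add_of_relativePosition_eq N hw_le hw'_le hm h
  have h_none : w none = w' none := by
    have := h_shift j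
    have := h_shift j'
    lia
  funext i
  have := h_shift i
  lia

theorem image_relativePosition_groundedTuples [Fintype ι] [DecidableEq ι]
    (hm : m < N) :
    relativePosition R '' (groundedTuples (Option ι) m : Set (Option ι → ℕ)) =
      {v : ι → R | CoveredByArc (insert 0 (Set.range v)) (m + 1)} := by
  refine Set.Subset.antisymm ?_ fun v hv ↦ ?_
  · rintro _ ⟨w, hw, rfl⟩
    exact coveredByArc_relativePosition (mem_groundedTuples.1 hw).1
  obtain ⟨c, hc_mem, hc⟩ := exists_mem_subset_arc (Set.insert_nonempty _ _) hv
  rw [← Option.range_elim] at hc_mem hc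
  choose w hw_lt hw using Set.range_subset_iff.1 hc
  obtain ⟨j, hj⟩ := hc_mem
  have hw_zero : w j = 0 := by
    have h_cast : (w j : R) = 0 := left_eq_add.1 (hj.symm.trans (hw j))
    exact Nat.eq_zero_of_dvd_of_lt ((CharP.cast_eq_zero_iff R N _).1 h_cast)
      ((Nat.le_of_lt_succ (hw_lt j)).trans_lt hm)
  have hc_eq : c = -(w none : R) := eq_neg_of_add_eq_zero_left (hw none).symm
  refine ⟨w, mem_groundedTuples.2 ⟨fun i ↦ Nat.le_of_lt_succ (hw_lt i), j, hw_zero⟩, ?_⟩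
  funext i
  rw [relativePosition, ← hc_eq]
  exact (hw (some i)).symm

theorem finite_setOf_coveredByArc [Finite ι] (hm : m < N) :
    {v : ι → R | CoveredByArc (insert 0 (Set.range v)) (m + 1)}.Finite := by
  classical
  have := Fintype.ofFinite ι
  rw [← image_relativePosition_groundedTuples N hm]
  exact (Finset.finite_toSet _).image _

theorem ncard_setOf_coveredByArc_add_pow [Fintype ι] (hm : 2 * m < N) :
    {v : ι → R | CoveredByArc (insert 0 (Set.range v)) (m + 1)}.ncard +
      m ^ (Fintype.card ι + 1) = (m + 1) ^ (Fintype.card ι + 1) := by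
  classical
  rw [← image_relativePosition_groundedTuples N (by lia),
    (injOn_relativePosition N hm).ncard_image, Set.ncard_coe_finset,
    ← Fintype.card_option, card_groundedTuples_add_pow]

end Counting

theorem stmt_10_general {R ι : Type*} [AddGroupWithOne R] [Fintype ι] (N n : ℕ) [CharP R N]
    (hn2 : 2 ≤ n) (hn : 2 * n ≤ N + 1) :
    ({v : ι → R | minArcLength (insert 0 (Set.range v)) = n}.ncard : ℤ) =
      2 * ((n : ℤ) ^ Fintype.card ι - ((n : ℤ) - 1) ^ Fintype.card ι) +
        ((n : ℤ) - 2) * ((n : ℤ) ^ Fintype.card ι - 2 * ((n : ℤ) - 1) ^ Fintype.card ι +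
          ((n : ℤ) - 2) ^ Fintype.card ι) := by
  obtain ⟨p, rfl⟩ : ∃ p, n = p + 2 := Nat.exists_eq_add_of_le' hn2
  let covered (m : ℕ) : Set (ι → R) := {v | CoveredByArc (insert 0 (Set.range v)) m}
  have h_eq_diff : {v : ι → R | minArcLength (insert 0 (Set.range v)) = p + 2} =
      covered (p + 2) \ covered (p + 1) :=
    Set.ext fun _ ↦ minArcLength_eq_succ_iff
  have h_subset : covered (p + 1) ⊆ covered (p + 2) := fun _ hv ↦ hv.mono (Nat.le_succ _)
  have h_diff := Set.ncard_sdiff_add_ncard_of_subset h_subset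
    (finite_setOf_coveredByArc N (by lia))
  have h_succ : (covered (p + 1)).ncard + p ^ (Fintype.card ι + 1) =
      (p + 1) ^ (Fintype.card ι + 1) :=
    ncard_setOf_coveredByArc_add_pow N (by lia)
  have h_succ_succ : (covered (p + 2)).ncard + (p + 1) ^ (Fintype.card ι + 1) =
      (p + 2) ^ (Fintype.card ι + 1) :=
    ncard_setOf_coveredByArc_add_pow N (by lia)
  rw [h_eq_diff]
  zify at h_diff h_succ h_succ_succ
  push_cast
  rw [show (p : ℤ) + 2 - 1 = p + 1 by ring, show (p : ℤ) + 2 - 2 = p by ring]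
  linear_combination h_diff + h_succ_succ - h_succ

/-- For `2 ≤ n ≤ ⌊N/2⌋`, the number of tuples
`(n₂, …, n_K) ∈ (ℤ/Nℤ)^{K-1}` for which the minimal length `m` of an arc containing
`{0, n₂, …, n_K}` equals exactly `n` is
`2(n^{K-1} - (n-1)^{K-1}) + (n-2)(n^{K-1} - 2(n-1)^{K-1} + (n-2)^{K-1})`. -/
theorem stmt_10 (N K n : ℕ) (hN : 2 ≤ N) (hK : 2 ≤ K) (hn2 : 2 ≤ n) (hn : n ≤ N / 2) :
    ({v : Fin (K - 1) → ZMod N |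
        sInf {m : ℕ | ∃ c : ZMod N, ∀ x ∈ insert (0 : ZMod N) (Set.range v),
          ∃ i : ℕ, i < m ∧ x = c + (i : ZMod N)} = n}.ncard : ℤ)
      = 2 * ((n : ℤ) ^ (K - 1) - ((n : ℤ) - 1) ^ (K - 1))
        + ((n : ℤ) - 2) *
            ((n : ℤ) ^ (K - 1) - 2 * ((n : ℤ) - 1) ^ (K - 1) + ((n : ℤ) - 2) ^ (K - 1)) := by
  simpa only [Fintype.card_fin, minArcLength, CoveredByArc, arc, Set.subset_def,
    Set.mem_ofPred_eq] using
    stmt_10_general (R := ZMod N) (ι := Fin (K - 1)) N n hn2 (by lia)
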